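/- There exist a sufficiently small constant c_γ > 0 and a constant k_0 such that for all integers k ≥ k_0 and all margins 0 < γ_i ≤ c_γ the following monotonicity holds: for unit vectors w_1, x_1, w_2, x_2 ∈ ℝ^m and labels y_1, y_2 ∈ {−1,1} with 0 < y_1⟨w_1,x_1⟩ ≤ y_2⟨w_2,x_2⟩ ≤ γ_i, one has Pr_{A,t}[ y_2⟨h_{A,t}(w_2), A x_2⟩ ≤ γ_i/2 ] ≤ Pr_{A,t}[ y_1⟨h_{A,t}(w_1), A x_1⟩ ≤ γ_i/2 ]. -/

import Mathlib

open MeasureTheory ProbabilityTheory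

noncomputable section

/-- Dot product on `Fin m → ℝ`. -/
def dotp {m : ℕ} (w x : Fin m → ℝ) : ℝ := ∑ j, w j * x j

/-- Margin loss `L_D^γ(w)` of `w` under a distribution `D` on `ℝ^m × ℝ`
(labels are encoded as reals in `{-1,1}`). -/
def lossD {m : ℕ} (D : Measure ((Fin m → ℝ) × ℝ)) (γ : ℝ) (w : Fin m → ℝ) : ℝ :=
  (D {p | p.2 * dotp w p.1 ≤ γ}).toReal

/-- Empirical margin loss `L_S^γ(w)` on a training set `S` of `n` labeled points. -/
def lossS {m n : ℕ} (S : Fin n → (Fin m → ℝ) × ℝ) (γ : ℝ) (w : Fin m → ℝ) : ℝ :=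
  (Nat.card {i : Fin n // (S i).2 * dotp w (S i).1 ≤ γ} : ℝ) / n

/-- The i.i.d. sample measure `D^n` over training sets of size `n`. -/
def trainM {m : ℕ} (D : Measure ((Fin m → ℝ) × ℝ)) (n : ℕ) :
    Measure (Fin n → (Fin m → ℝ) × ℝ) := Measure.pi fun _ => D

/-- Spacing of the rounding grid: `(10 √k)⁻¹`. -/
def gridStep (k : ℕ) : ℝ := (10 * Real.sqrt k)⁻¹

/-- The largest grid point `(1/2)(10√k)⁻¹ + z(10√k)⁻¹ ≤ g`. -/
def roundDown (k : ℕ) (g : ℝ) : ℝ :=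
  gridStep k / 2 + (⌊(g - gridStep k / 2) / gridStep k⌋ : ℝ) * gridStep k

/-- The probability `p(z)` of rounding `g` down, chosen so the rounding is unbiased. -/
def roundProb (k : ℕ) (g : ℝ) : ℝ := 1 - (g - roundDown k g) / gridStep k

/-- Matrix-vector product, `(Aw)_i = ∑ j A i j * w j`. -/
def matVec {k m : ℕ} (A : Fin k → Fin m → ℝ) (w : Fin m → ℝ) : Fin k → ℝ :=
  fun i => ∑ j, A i j * w j

/-- The randomized rounding `h_{A,t}(w)` of `Aw` to the grid. -/
def hRound {k m : ℕ} (A : Fin k → Fin m → ℝ) (t : Fin k → ℝ) (w : Fin m → ℝ) :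
    Fin k → ℝ :=
  fun i => if t i ≤ roundProb k (matVec A w i)
    then roundDown k (matVec A w i)
    else roundDown k (matVec A w i) + gridStep k

/-- The joint law of `(A, t)`: `A` has i.i.d. `N(0,1/k)` entries and `t` has i.i.d.
uniform `[0,1]` coordinates, independent of `A`. -/
def roundMeasure (k m : ℕ) : Measure ((Fin k → Fin m → ℝ) × (Fin k → ℝ)) :=
  (Measure.pi fun _ : Fin k => Measure.pi fun _ : Fin m =>
      gaussianReal 0 (k : NNReal)⁻¹).prod
    (Measure.pi fun _ : Fin k => volume.restrict (Set.Icc (0 : ℝ) 1))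

/-- Reduced setup: the data domain `X ⊆ S^d ⊂ ℝ^{d+1}` of unit vectors whose first
`d` coordinates have norm at most `cγ`. -/
def Xset (d : ℕ) (cγ : ℝ) : Set (Fin (d+1) → ℝ) :=
  {x | (∑ j, x j ^ 2) = 1 ∧ (∑ j : Fin d, x j.castSucc ^ 2) ≤ cγ ^ 2}

/-- Reduced setup: the hypothesis class `H = S^{d-1} × {0} ⊂ ℝ^{d+1}`. -/
def Hset (d : ℕ) : Set (Fin (d+1) → ℝ) :=
  {w | (∑ j, w j ^ 2) = 1 ∧ w (Fin.last d) = 0}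

/-- `γ_i = 2^{i-1} n^{-1/2}`. -/
def γlo (n i : ℕ) : ℝ := 2 ^ (i - 1) / Real.sqrt n

/-- `γ_{i+1} = 2^i n^{-1/2}`. -/
def γhi (n i : ℕ) : ℝ := 2 ^ i / Real.sqrt n

/-- `ℓ_{j+1} = 2^j n^{-1}`. -/
def ellhi (n j : ℕ) : ℝ := 2 ^ j / n

/-- The interval `L_j`: `L_0 = [0, n⁻¹]`, and `L_j = (2^{j-1}/n, 2^j/n]` for `j ≥ 1`. -/
def Lset (n j : ℕ) : Set ℝ :=
  if j = 0 then Set.Icc 0 (n : ℝ)⁻¹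
  else Set.Ioc ((2 : ℝ) ^ (j - 1) / n) ((2 : ℝ) ^ j / n)

/-- Margin loss of `h ∈ ℝ^k` under the pushforward distribution `A·D`. -/
def kLossD {k m : ℕ} (D : Measure ((Fin m → ℝ) × ℝ)) (γ : ℝ) (h : Fin k → ℝ)
    (A : Fin k → Fin m → ℝ) : ℝ :=
  (D {q | q.2 * (∑ r, h r * ∑ s, A r s * q.1 s) ≤ γ}).toReal

/-- Empirical margin loss of `h ∈ ℝ^k` on the transformed training set `A·S`. -/
def kLossS {k m n : ℕ} (S : Fin n → (Fin m → ℝ) × ℝ) (γ : ℝ) (h : Fin k → ℝ)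
    (A : Fin k → Fin m → ℝ) : ℝ :=
  (Nat.card {i : Fin n // (S i).2 * (∑ r, h r * ∑ s, A r s * (S i).1 s) ≤ γ} : ℝ) / n

/-- Specification of the function `φ` from the paper, for margin parameter `γi`:
on `[-cγ, 0]` it equals the probability (over the randomized rounding) that the rounded
margin exceeds `γi/2` given original margin `α`; on `(0, γi]` it interpolates linearly to
`0`; on `(γi, cγ]` it is `0`. -/
def phiSpec (d k : ℕ) (cγ γi : ℝ) (φ : ℝ → ℝ) : Prop :=
  (∀ (w x : Fin (d+1) → ℝ) (y : ℝ), w ∈ Hset d → x ∈ Xset d cγ →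
      (y = 1 ∨ y = -1) → y * dotp w x ≤ 0 →
      φ (y * dotp w x) =
        (roundMeasure k (d+1)
          {p | γi / 2 < y * ∑ r, hRound p.1 p.2 w r * ∑ s, p.1 r s * x s}).toReal) ∧
  (∀ α : ℝ, 0 < α → α ≤ γi → φ α = ((γi - α) / γi) * φ 0) ∧
  (∀ α : ℝ, γi < α → α ≤ cγ → φ α = 0)

/-- Specification of the function `ρ` from the paper, for margin parameter `γi`. -/
def rhoSpec (d k : ℕ) (cγ γi : ℝ) (ρ : ℝ → ℝ) : Prop :=
  (∀ (w x : Fin (d+1) → ℝ) (y : ℝ), w ∈ Hset d → x ∈ Xset d cγ →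
      (y = 1 ∨ y = -1) → γi < y * dotp w x →
      ρ (y * dotp w x) =
        (roundMeasure k (d+1)
          {p | y * ∑ r, hRound p.1 p.2 w r * ∑ s, p.1 r s * x s ≤ γi / 2}).toReal) ∧
  (∀ α : ℝ, 0 < α → α ≤ γi →
      ∀ (w x : Fin (d+1) → ℝ) (y : ℝ), w ∈ Hset d → x ∈ Xset d cγ →
      (y = 1 ∨ y = -1) → y * dotp w x = γi →
      ρ α = (α / γi) *
        (roundMeasure k (d+1)
          {p | y * ∑ r, hRound p.1 p.2 w r * ∑ s, p.1 r s * x s ≤ γi / 2}).toReal) ∧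
  (∀ α : ℝ, -cγ ≤ α → α ≤ 0 → ρ α = 0)

theorem integral_cexp_sum_pi_gaussianReal {ι : Type*} [Fintype ι] (v : NNReal) (c : ι → ℝ) :
    ∫ a, Complex.exp (((∑ j, c j * a j : ℝ) : ℂ) * Complex.I)
        ∂(Measure.pi fun _ : ι => gaussianReal 0 v) =
      Complex.exp (-((v * ∑ j, c j ^ 2 : ℝ) : ℂ) / 2) := by
  have h1 : ∀ a : ι → ℝ, Complex.exp (((∑ j, c j * a j : ℝ) : ℂ) * Complex.I) =
      ∏ j, Complex.exp (c j * a j * Complex.I) := by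
    intro a
    rw [← Complex.exp_sum]
    congr 1
    push_cast
    rw [Finset.sum_mul]
  simp_rw [h1]
  rw [integral_fintype_prod_eq_prod (f := fun j x => Complex.exp (c j * (x : ℝ) * Complex.I))]
  simp_rw [← charFun_apply_real, charFun_gaussianReal]
  rw [← Complex.exp_sum]
  congr 1
  push_cast
  rw [Finset.mul_sum, ← Finset.sum_neg_distrib, Finset.sum_div]
  refine Finset.sum_congr rfl fun j _ => ?_
  ring

theorem map_sum_pi_gaussianReal {ι : Type*} [Fintype ι] (v : NNReal) (c : ι → ℝ) :
    (Measure.pi fun _ : ι => gaussianReal 0 v).map (fun a => ∑ j, c j * a j) =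
      gaussianReal 0 (v * (∑ j, c j ^ 2).toNNReal) := by
  have : IsProbabilityMeasure ((Measure.pi fun _ : ι => gaussianReal 0 v).map
      (fun a => ∑ j, c j * a j)) := Measure.isProbabilityMeasure_map (Measurable.aemeasurable (by fun_prop))
  refine Measure.ext_of_charFun (funext fun t => ?_)
  rw [charFun_apply_real, integral_map (Measurable.aemeasurable (by fun_prop)) (by fun_prop),
    charFun_gaussianReal]
  have h := integral_cexp_sum_pi_gaussianReal v (fun j => t * c j)
  have h1 : ∀ a : ι → ℝ, ∑ j, t * c j * a j = t * ∑ j, c j * a j := fun a => by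
    rw [Finset.mul_sum]; exact Finset.sum_congr rfl fun j _ => by ring
  have h2 : ∑ j, (t * c j) ^ 2 = t ^ 2 * ∑ j, c j ^ 2 := by
    rw [Finset.mul_sum]; exact Finset.sum_congr rfl fun j _ => by ring
  simp_rw [h1, h2] at h
  push_cast at h ⊢
  rw [h, Real.coe_toNNReal _ (Finset.sum_nonneg fun j _ => sq_nonneg _)]
  congr 1
  push_cast
  ring

/-- Two unit linear forms of a standard Gaussian vector have the law of a correlated Gaussian pair. -/
theorem map_sum_sum_pi_gaussianReal {ι : Type*} [Fintype ι] (v : NNReal) (w x : ι → ℝ)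
    (β : ℝ) (hw : ∑ j, w j ^ 2 = 1) (hx : ∑ j, x j ^ 2 = 1)
    (hβ : β ^ 2 = 1 - (∑ j, w j * x j) ^ 2) :
    (Measure.pi fun _ : ι => gaussianReal 0 v).map
        (fun a => (∑ j, a j * w j, ∑ j, a j * x j)) =
      ((gaussianReal 0 v).prod (gaussianReal 0 v)).map
        (fun p => (p.1, (∑ j, w j * x j) * p.1 + β * p.2)) := by
  set α := ∑ j, w j * x j
  have : IsProbabilityMeasure ((Measure.pi fun _ : ι => gaussianReal 0 v).map
      (fun a => (∑ j, a j * w j, ∑ j, a j * x j))) :=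
    Measure.isProbabilityMeasure_map (by fun_prop)
  have : IsProbabilityMeasure (((gaussianReal 0 v).prod (gaussianReal 0 v)).map
      (fun p => (p.1, α * p.1 + β * p.2))) :=
    Measure.isProbabilityMeasure_map (by fun_prop)
  refine Measure.ext_of_charFunDual (funext fun L => ?_)
  rw [charFunDual_apply, charFunDual_apply,
    integral_map (by fun_prop) (Measurable.aestronglyMeasurable (by fun_prop)),
    integral_map (by fun_prop) (Measurable.aestronglyMeasurable (by fun_prop))]
  have hL : ∀ p : ℝ × ℝ, L p = L (1, 0) * p.1 + L (0, 1) * p.2 := by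
    intro p
    have : p = p.1 • ((1, 0) : ℝ × ℝ) + p.2 • ((0, 1) : ℝ × ℝ) := by ext <;> simp
    conv_lhs => rw [this]
    rw [map_add, map_smul, map_smul, smul_eq_mul, smul_eq_mul]
    ring
  set s := L (1, 0)
  set r := L (0, 1)
  have h := integral_cexp_sum_pi_gaussianReal v (fun j => s * w j + r * x j)
  have h1 : ∀ a : ι → ℝ, ∑ j, (s * w j + r * x j) * a j =
      L (∑ j, a j * w j, ∑ j, a j * x j) := fun a => by
    rw [hL, Finset.mul_sum, Finset.mul_sum, ← Finset.sum_add_distrib]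
    exact Finset.sum_congr rfl fun j _ => by ring
  have h2 : ∑ j, (s * w j + r * x j) ^ 2 = s ^ 2 + r ^ 2 + 2 * s * r * α := by
    have : ∀ j, (s * w j + r * x j) ^ 2 =
        s ^ 2 * w j ^ 2 + r ^ 2 * x j ^ 2 + 2 * s * r * (w j * x j) := fun j => by ring
    simp_rw [this, Finset.sum_add_distrib, ← Finset.mul_sum, hw, hx, mul_one]
    rfl
  simp_rw [h1, h2] at h
  rw [h]
  have h3 : ∀ p : ℝ × ℝ, Complex.exp ((L (p.1, α * p.1 + β * p.2) : ℂ) * Complex.I) =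
      Complex.exp (((s + r * α : ℝ) : ℂ) * p.1 * Complex.I) *
        Complex.exp (((r * β : ℝ) : ℂ) * p.2 * Complex.I) := fun p => by
    rw [← Complex.exp_add, hL]
    congr 1
    push_cast
    ring
  simp_rw [h3]
  rw [integral_prod_mul (fun x : ℝ => Complex.exp (((s + r * α : ℝ) : ℂ) * x * Complex.I))
    (fun x : ℝ => Complex.exp (((r * β : ℝ) : ℂ) * x * Complex.I)),
    ← charFun_apply_real, ← charFun_apply_real, charFun_gaussianReal, charFun_gaussianReal,
    ← Complex.exp_add]
  congr 1
  have hβ' : (β : ℂ) ^ 2 = 1 - (α : ℂ) ^ 2 := by exact_mod_cast hβ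
  push_cast
  linear_combination ((r : ℂ) ^ 2 * v / 2) * hβ'

theorem cdf_gaussianReal_sub (u v : ℝ) (huv : u ≤ v) :
    cdf (gaussianReal 0 1) v - cdf (gaussianReal 0 1) u =
      ∫ x in Set.Ioc u v, gaussianPDFReal 0 1 x := by
  have h := measure_cdf (gaussianReal 0 1)
  have h2 : (gaussianReal 0 1) (Set.Ioc u v) =
      ENNReal.ofReal (cdf (gaussianReal 0 1) v - cdf (gaussianReal 0 1) u) := by
    conv_lhs => rw [← h]
    exact StieltjesFunction.measure_Ioc _ _ _
  rw [gaussianReal_apply_eq_integral 0 one_ne_zero] at h2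
  exact ((ENNReal.ofReal_eq_ofReal_iff
    (setIntegral_nonneg measurableSet_Ioc fun x _ => gaussianPDFReal_nonneg 0 1 x)
    (sub_nonneg.2 (monotone_cdf _ huv))).1 h2).symm

theorem cdf_gaussianReal_sub_le (u v : ℝ) (huv : u ≤ v) :
    cdf (gaussianReal 0 1) v - cdf (gaussianReal 0 1) u ≤ v - u := by
  rw [cdf_gaussianReal_sub u v huv]
  have hp : ∀ x, gaussianPDFReal 0 1 x ≤ 1 := by
    intro x
    rw [gaussianPDFReal]
    have h1 : (√(2 * Real.pi * (1 : NNReal)))⁻¹ ≤ 1 := by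
      apply inv_le_one_of_one_le₀
      rw [Real.one_le_sqrt]
      simp only [NNReal.coe_one]
      linarith [Real.pi_gt_three]
    have h2 : Real.exp (-(x - 0) ^ 2 / (2 * (1 : NNReal))) ≤ 1 := by
      rw [Real.exp_le_one_iff]
      simp only [NNReal.coe_one]
      nlinarith [sq_nonneg x]
    calc _ ≤ (1 : ℝ) * 1 := by gcongr
      _ = 1 := by ring
  calc ∫ x in Set.Ioc u v, gaussianPDFReal 0 1 x ≤ ∫ x in Set.Ioc u v, (1 : ℝ) :=
        setIntegral_mono (integrable_gaussianPDFReal 0 1).integrableOn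
          (by simp) hp
    _ = v - u := by simp [huv]

theorem le_cdf_gaussianReal_sub (u v M : ℝ) (huv : u ≤ v) (hu : -M ≤ u) (hv : v ≤ M) :
    (v - u) * (Real.exp (-M ^ 2 / 2) / 3) ≤
      cdf (gaussianReal 0 1) v - cdf (gaussianReal 0 1) u := by
  rw [cdf_gaussianReal_sub u v huv]
  have hp : ∀ x ∈ Set.Ioc u v, Real.exp (-M ^ 2 / 2) / 3 ≤ gaussianPDFReal 0 1 x := by
    intro x hx
    rw [gaussianPDFReal]
    have h1 : (3 : ℝ)⁻¹ ≤ (√(2 * Real.pi * (1 : NNReal)))⁻¹ := by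
      have : √(2 * Real.pi * (1 : NNReal)) ≤ 3 := by
        rw [Real.sqrt_le_left (by norm_num)]
        simp only [NNReal.coe_one]
        linarith [Real.pi_lt_four]
      have h0 : 0 < √(2 * Real.pi * (1 : NNReal)) := by
        have := Real.pi_pos
        simp only [NNReal.coe_one]
        positivity
      gcongr
    have h2 : Real.exp (-M ^ 2 / 2) ≤ Real.exp (-(x - 0) ^ 2 / (2 * (1 : NNReal))) := by
      rw [Real.exp_le_exp]
      simp only [NNReal.coe_one]
      have : x ^ 2 ≤ M ^ 2 := by
        apply sq_le_sq'
        · linarith [hx.1]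
        · linarith [hx.2]
      linarith
    calc _ = (3 : ℝ)⁻¹ * Real.exp (-M ^ 2 / 2) := by ring
      _ ≤ _ := by gcongr
  calc (v - u) * (Real.exp (-M ^ 2 / 2) / 3)
      = ∫ x in Set.Ioc u v, (Real.exp (-M ^ 2 / 2) / 3) := by simp [huv]
    _ ≤ _ := setIntegral_mono_on (by simp) (integrable_gaussianPDFReal 0 1).integrableOn
          measurableSet_Ioc hp

theorem integral_exp_neg_sq_gaussianReal (k : ℕ) (hk : 0 < k) :
    ∫ x, Real.exp (-(3 / 2 * k * x ^ 2)) ∂(gaussianReal 0 (k : NNReal)⁻¹) = 1 / 2 := by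
  have hk' : (0 : ℝ) < k := by exact_mod_cast hk
  rw [integral_gaussianReal_eq_integral_smul (by simp [hk.ne'])]
  have h : ∀ x : ℝ, gaussianPDFReal 0 (k : NNReal)⁻¹ x • Real.exp (-(3 / 2 * k * x ^ 2)) =
      (√(2 * Real.pi * (k : ℝ)⁻¹))⁻¹ * Real.exp (-(2 * k) * x ^ 2) := by
    intro x
    rw [gaussianPDFReal, smul_eq_mul, mul_assoc, ← Real.exp_add]
    push_cast
    congr 2
    field_simp
    ring
  simp_rw [h]
  rw [integral_const_mul, integral_gaussian, ← Real.sqrt_inv,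
    ← Real.sqrt_mul (by have := Real.pi_pos; positivity)]
  have : (2 * Real.pi * (k : ℝ)⁻¹)⁻¹ * (Real.pi / (2 * k)) = (1 / 2) ^ 2 := by
    have := Real.pi_pos
    field_simp
  rw [this, Real.sqrt_sq (by norm_num)]

/-- Small-ball estimate for a Gaussian vector of expected squared norm `1`. -/
theorem pi_gaussianReal_sum_sq_le (k : ℕ) (hk : 0 < k) :
    (Measure.pi fun _ : Fin k => gaussianReal 0 (k : NNReal)⁻¹).real
      {a | ∑ i, a i ^ 2 ≤ 1 / 4} ≤ (3 / 4) ^ k := by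
  have hk' : (0 : ℝ) < k := by exact_mod_cast hk
  set μ := Measure.pi fun _ : Fin k => gaussianReal 0 (k : NNReal)⁻¹
  have hint : ∫ a, Real.exp (-(3 / 2 * k * ∑ i, a i ^ 2)) ∂μ = (1 / 2) ^ k := by
    have : ∀ a : Fin k → ℝ, Real.exp (-(3 / 2 * k * ∑ i, a i ^ 2)) =
        ∏ i, Real.exp (-(3 / 2 * k * a i ^ 2)) := fun a => by
      rw [← Real.exp_sum, Finset.sum_neg_distrib, Finset.mul_sum]
    simp_rw [this]
    rw [integral_fintype_prod_eq_pow (fun x : ℝ => Real.exp (-(3 / 2 * k * x ^ 2))),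
      integral_exp_neg_sq_gaussianReal k hk, Fintype.card_fin]
  have hm := mul_meas_ge_le_integral_of_nonneg (μ := μ)
    (f := fun a => Real.exp (-(3 / 2 * k * ∑ i, a i ^ 2)))
    (ae_of_all _ fun a => (Real.exp_pos _).le)
    (by
      refine Integrable.of_bound (C := 1) (Measurable.aestronglyMeasurable (by fun_prop))
        (ae_of_all _ fun a => ?_)
      rw [Real.norm_eq_abs, Real.abs_exp, Real.exp_le_one_iff]
      have : 0 ≤ ∑ i, a i ^ 2 := Finset.sum_nonneg fun i _ => sq_nonneg _
      have : 0 ≤ 3 / 2 * (k : ℝ) * ∑ i, a i ^ 2 := by positivity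
      linarith)
    (Real.exp (-(3 / 8 * k)))
  rw [hint] at hm
  have hs : {a : Fin k → ℝ | Real.exp (-(3 / 8 * k)) ≤ Real.exp (-(3 / 2 * k * ∑ i, a i ^ 2))} =
      {a | ∑ i, a i ^ 2 ≤ 1 / 4} := by
    ext a
    simp only [Set.mem_ofPred_eq, Real.exp_le_exp, neg_le_neg_iff]
    rw [show 3 / 8 * (k : ℝ) = 3 / 2 * k * (1 / 4) by ring,
      mul_le_mul_iff_right₀ (by positivity)]
  rw [hs] at hm
  have he : Real.exp (3 / 8) ≤ 3 / 2 := by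
    have h1 : Real.exp (3 / 8) ^ 8 ≤ (3 / 2) ^ 8 := by
      rw [← Real.exp_nat_mul]
      have : Real.exp ((8 : ℕ) * (3 / 8)) = Real.exp 1 ^ 3 := by
        rw [← Real.exp_nat_mul]; norm_num
      rw [this]
      have := Real.exp_one_lt_d9
      have h0 := Real.exp_pos 1
      calc Real.exp 1 ^ 3 ≤ 2.7182818286 ^ 3 := by gcongr
        _ ≤ _ := by norm_num
    exact le_of_pow_le_pow_left₀ (by norm_num) (by norm_num) h1
  have hek : Real.exp (3 / 8 * k) ≤ (3 / 2) ^ k := by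
    rw [mul_comm, Real.exp_nat_mul]
    gcongr
  have hpos := Real.exp_pos (3 / 8 * k)
  calc μ.real {a | ∑ i, a i ^ 2 ≤ 1 / 4}
      = Real.exp (3 / 8 * k) *
          (Real.exp (-(3 / 8 * k)) * μ.real {a | ∑ i, a i ^ 2 ≤ 1 / 4}) := by
        rw [← mul_assoc, ← Real.exp_add]; simp
    _ ≤ (3 / 2) ^ k * (1 / 2) ^ k := by gcongr
    _ = (3 / 4) ^ k := by rw [← mul_pow]; norm_num

theorem pi_gaussianReal_le_sum_sq (k : ℕ) (hk : 0 < k) :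
    (Measure.pi fun _ : Fin k => gaussianReal 0 (k : NNReal)⁻¹).real
      {a | 4 ≤ ∑ i, a i ^ 2} ≤ 1 / 4 := by
  have hk' : (0 : ℝ) < k := by exact_mod_cast hk
  have hsq : Integrable (fun x : ℝ => x ^ 2) (gaussianReal 0 (k : NNReal)⁻¹) :=
    (memLp_id_gaussianReal (μ := 0) (v := (k : NNReal)⁻¹) 2).integrable_sq
  have hsq' : ∫ x : ℝ, x ^ 2 ∂(gaussianReal 0 (k : NNReal)⁻¹) = (k : ℝ)⁻¹ := by
    have h := variance_fun_id_gaussianReal (μ := 0) (v := (k : NNReal)⁻¹)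
    rw [variance_of_integral_eq_zero (by fun_prop) (by simp [integral_id_gaussianReal])] at h
    simpa using h
  set μ := Measure.pi fun _ : Fin k => gaussianReal 0 (k : NNReal)⁻¹
  have hi : ∀ i ∈ Finset.univ, Integrable (fun a : Fin k → ℝ => a i ^ 2) μ := fun i _ =>
    (measurePreserving_eval
      (fun _ : Fin k => gaussianReal 0 (k : NNReal)⁻¹) i).integrable_comp_of_integrable
      hsq
  have hint : ∫ a, ∑ i, a i ^ 2 ∂μ = 1 := by
    rw [integral_finsetSum _ hi]
    have : ∀ i, ∫ a : Fin k → ℝ, a i ^ 2 ∂μ = (k : ℝ)⁻¹ := fun i => by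
      rw [← hsq', ← (measurePreserving_eval
        (fun _ : Fin k => gaussianReal 0 (k : NNReal)⁻¹) i).map_eq,
        integral_map (measurable_pi_apply i).aemeasurable (by fun_prop)]
    simp_rw [this]
    simp [hk'.ne']
  have hm := mul_meas_ge_le_integral_of_nonneg (μ := μ)
    (f := fun a => ∑ i, a i ^ 2)
    (ae_of_all _ fun a => Finset.sum_nonneg fun i _ => sq_nonneg _)
    (integrable_finsetSum _ hi) 4
  rw [hint] at hm
  linarith

/-- If the slope-to-offset pairs `(b, c)` satisfy `c ^ 2 = 1 + b ^ 2`, then the increment of `c`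
is dominated by that of `b`. -/
theorem sub_le_sub_of_sq_eq_one_add_sq {b₁ b₂ c₁ c₂ : ℝ} (hb₁ : 0 ≤ b₁) (hb : b₁ ≤ b₂)
    (hc₁ : 0 < c₁) (hc₂ : 0 < c₂) (h₁ : c₁ ^ 2 = 1 + b₁ ^ 2) (h₂ : c₂ ^ 2 = 1 + b₂ ^ 2) :
    0 ≤ c₂ - c₁ ∧ c₂ - c₁ ≤ b₂ - b₁ := by
  have hcb₁ : b₁ ≤ c₁ := abs_le_of_sq_le_sq' (by linarith) hc₁.le |>.2
  have hcb₂ : b₂ ≤ c₂ := abs_le_of_sq_le_sq' (by linarith) hc₂.le |>.2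
  have h : (c₂ - c₁) * (c₂ + c₁) = (b₂ - b₁) * (b₂ + b₁) := by linear_combination h₂ - h₁
  have hs : 0 < c₂ + c₁ := by linarith
  constructor
  · by_contra! hn
    nlinarith [mul_nonneg (sub_nonneg.2 hb) (by linarith : 0 ≤ b₂ + b₁)]
  · by_contra! hn
    nlinarith [mul_nonneg (sub_nonneg.2 hb) (by linarith : 0 ≤ c₂ + c₁ - (b₂ + b₁))]

/-- Pointwise comparison of the conditional probabilities at two margins, given the squared norm `Q`
of the projected hypothesis. -/
theorem le_cdf_sub_cdf_of_sum_sq {K γ P N Q b₁ b₂ c₁ c₂ : ℝ} (hK : 0 < K)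
    (hγ : 0 < γ) (hγ' : γ ≤ 1 / 1000)
    (hP : 19 / 20 * Q - 1 / 20 ≤ P) (hP' : P ≤ 21 / 20 * Q + 1 / 20)
    (hN : 1 / 20 ≤ N) (hN' : N ^ 2 ≤ 2 * Q + 1 / 50) (hQ : 0 ≤ Q)
    (hb₁ : 0 ≤ b₁) (hb : b₁ ≤ b₂) (hb₂ : b₂ ≤ 11 / 10 * γ) (hc₁ : 0 < c₁) (hc₂ : 0 < c₂)
    (h₁ : c₁ ^ 2 = 1 + b₁ ^ 2) (h₂ : c₂ ^ 2 = 1 + b₂ ^ 2) :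
    (b₂ - b₁) * K * (if Q ≤ 1 / 4 then -2 else
        if Q < 4 then Real.exp (-K ^ 2 / 200) / 100 else 0) ≤
      cdf (gaussianReal 0 1) (K * (γ / 2 * c₁ - b₁ * P) / N) -
        cdf (gaussianReal 0 1) (K * (γ / 2 * c₂ - b₂ * P) / N) := by
  obtain ⟨he, he'⟩ := sub_le_sub_of_sq_eq_one_add_sq hb₁ hb hc₁ hc₂ h₁ h₂
  set δ := b₂ - b₁ with hδ
  have hδ0 : 0 ≤ δ := sub_nonneg.2 hb
  have hN0 : 0 < N := by linarith
  have hdiff : K * (γ / 2 * c₁ - b₁ * P) / N - K * (γ / 2 * c₂ - b₂ * P) / N =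
      K * (δ * P - γ / 2 * (c₂ - c₁)) / N := by
    rw [hδ]; ring
  have hγe : γ / 2 * (c₂ - c₁) ≤ γ / 2 * δ := by gcongr
  have hγδ : γ / 2 * δ ≤ 1 / 2000 * δ :=
    mul_le_mul_of_nonneg_right (by linarith) hδ0
  have hmono : γ / 2 ≤ P → K * (γ / 2 * c₂ - b₂ * P) / N ≤ K * (γ / 2 * c₁ - b₁ * P) / N := by
    intro h
    rw [← sub_nonneg, hdiff]
    have : 0 ≤ δ * P - γ / 2 * (c₂ - c₁) := by
      have h6 : δ * (γ / 2) ≤ δ * P := mul_le_mul_of_nonneg_left h hδ0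
      linarith
    positivity
  split_ifs with hQ1 hQ2
  · rcases le_total (K * (γ / 2 * c₂ - b₂ * P) / N) (K * (γ / 2 * c₁ - b₁ * P) / N) with h | h
    · have := monotone_cdf (gaussianReal 0 1) h
      have h0 : 0 ≤ δ * K := by positivity
      linarith
    · have h3 := cdf_gaussianReal_sub_le _ _ h
      have h4 : -(2 * δ * K) ≤ K * (δ * P - γ / 2 * (c₂ - c₁)) / N := by
        rw [le_div_iff₀ hN0]
        have h5 : -(δ / 10) ≤ δ * P - γ / 2 * (c₂ - c₁) := by
          have h7 : δ * -(1 / 20) ≤ δ * P := mul_le_mul_of_nonneg_left (by linarith) hδ0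
          linarith
        have h6 : δ * K * (1 / 20) ≤ δ * K * N := by gcongr
        linarith [mul_le_mul_of_nonneg_left h5 hK.le]
      linarith
  · push Not at hQ1
    have hle := hmono (by linarith)
    have hcc : c₂ ≤ 11 / 10 := by
      refine abs_le_of_sq_le_sq' ?_ (by norm_num) |>.2
      have : b₂ ^ 2 ≤ (1 / 10) ^ 2 := pow_le_pow_left₀ (hb₁.trans hb) (by linarith) 2
      linarith
    have hcc₁ : c₁ ≤ 11 / 10 := by linarith
    have hN3 : N ≤ 3 := abs_le_of_sq_le_sq' (by linarith) (by norm_num) |>.2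
    have hP0 : 0 ≤ P := by linarith
    have hPP : P ≤ 17 / 4 := by linarith
    have hM := le_cdf_gaussianReal_sub _ _ (K / 10) hle
      (by
        rw [le_div_iff₀ hN0]
        have h5 : b₂ * P ≤ 11 / 10 * γ * (17 / 4) := by gcongr
        have h6 : 0 ≤ γ / 2 * c₂ := by positivity
        have h7 : K * (1 / 20) ≤ K * N := by gcongr
        have h8 : -(1 / 200) ≤ γ / 2 * c₂ - b₂ * P := by linarith
        linarith [mul_le_mul_of_nonneg_left h8 hK.le])
      (by
        rw [div_le_iff₀ hN0]
        have h5 : γ / 2 * c₁ ≤ γ / 2 * (11 / 10) := by gcongr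
        have h6 : 0 ≤ b₁ * P := by positivity
        have h7 : K * (1 / 20) ≤ K * N := by gcongr
        have h8 : γ / 2 * c₁ - b₁ * P ≤ 1 / 200 := by linarith
        linarith [mul_le_mul_of_nonneg_left h8 hK.le])
    refine le_trans ?_ hM
    rw [hdiff, show -(K / 10) ^ 2 / 2 = -K ^ 2 / 200 by ring]
    have h9 : δ * K * (3 / 100) ≤ K * (δ * P - γ / 2 * (c₂ - c₁)) / N := by
      rw [le_div_iff₀ hN0]
      have h5 : δ * (9 / 100) ≤ δ * P - γ / 2 * (c₂ - c₁) := by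
        have h6 : δ * (37 / 200) ≤ δ * P := mul_le_mul_of_nonneg_left (by linarith) hδ0
        linarith
      calc δ * K * (3 / 100) * N ≤ δ * K * (3 / 100) * 3 := by gcongr
        _ = K * (δ * (9 / 100)) := by ring
        _ ≤ _ := by gcongr
    calc _ = δ * K * (3 / 100) * (Real.exp (-K ^ 2 / 200) / 3) := by ring
      _ ≤ _ := by gcongr
  · have := monotone_cdf (gaussianReal 0 1) (hmono (by linarith))
    linarith

theorem sum_mul_bounds_of_abs_sub_le {k : ℕ} (hk : 0 < k) (a h : Fin k → ℝ)
    (hh : ∀ i, |h i - a i| ≤ gridStep k) (hh' : ∀ i, gridStep k / 2 ≤ |h i|) :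
    19 / 20 * ∑ i, a i ^ 2 - 1 / 20 ≤ ∑ i, h i * a i ∧
    ∑ i, h i * a i ≤ 21 / 20 * ∑ i, a i ^ 2 + 1 / 20 ∧
    1 / 20 ≤ √(∑ i, h i ^ 2) ∧ √(∑ i, h i ^ 2) ^ 2 ≤ 2 * ∑ i, a i ^ 2 + 1 / 50 := by
  have hk' : (0 : ℝ) < k := by exact_mod_cast hk
  set σ := gridStep k with hσ
  have hσ0 : 0 < σ := by rw [hσ, gridStep]; positivity
  have hσ2 : k * σ ^ 2 = 1 / 100 := by
    rw [hσ, gridStep, inv_pow, mul_pow, Real.sq_sqrt hk'.le]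
    field_simp
    norm_num
  have hconst : ∀ c : ℝ, ∑ _i : Fin k, c = k * c := fun c => by simp
  refine ⟨?_, ?_, ?_, ?_⟩
  · have : ∑ i, (19 / 20 * a i ^ 2 - 5 * σ ^ 2) ≤ ∑ i, h i * a i := by
      refine Finset.sum_le_sum fun i _ => ?_
      have h1 := abs_le.1 (hh i)
      have h2 : |(h i - a i) * a i| ≤ σ * |a i| := by rw [abs_mul]; gcongr; exact hh i
      have h3 := (abs_le.1 h2).1
      nlinarith [sq_nonneg (|a i| - 10 * σ), sq_abs (a i)]
    rw [Finset.sum_sub_distrib, hconst, ← Finset.mul_sum] at this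
    linarith
  · have : ∑ i, h i * a i ≤ ∑ i, (21 / 20 * a i ^ 2 + 5 * σ ^ 2) := by
      refine Finset.sum_le_sum fun i _ => ?_
      have h2 : |(h i - a i) * a i| ≤ σ * |a i| := by rw [abs_mul]; gcongr; exact hh i
      have h3 := (abs_le.1 h2).2
      nlinarith [sq_nonneg (|a i| - 10 * σ), sq_abs (a i)]
    rw [Finset.sum_add_distrib, hconst, ← Finset.mul_sum] at this
    linarith
  · refine Real.le_sqrt_of_sq_le ?_
    have : ∑ _i : Fin k, (σ / 2) ^ 2 ≤ ∑ i, h i ^ 2 := by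
      refine Finset.sum_le_sum fun i _ => ?_
      rw [← sq_abs (h i)]
      gcongr
      exact hh' i
    rw [hconst] at this
    linarith
  · rw [Real.sq_sqrt (Finset.sum_nonneg fun i _ => sq_nonneg _)]
    have : ∑ i, h i ^ 2 ≤ ∑ i, (2 * a i ^ 2 + 2 * σ ^ 2) := by
      refine Finset.sum_le_sum fun i _ => ?_
      have h1 : (h i - a i) ^ 2 ≤ σ ^ 2 := sq_le_sq' (abs_le.1 (hh i)).1 (abs_le.1 (hh i)).2
      nlinarith [sq_nonneg (h i - 2 * a i)]
    rw [Finset.sum_add_distrib, hconst, ← Finset.mul_sum] at this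
    linarith

/-- The randomized rounding of a vector `a ∈ ℝ^k` with rounding thresholds `t`. -/
def gridRound {k : ℕ} (t a : Fin k → ℝ) : Fin k → ℝ :=
  fun i => if t i ≤ roundProb k (a i) then roundDown k (a i) else roundDown k (a i) + gridStep k

theorem hRound_eq_gridRound {k m : ℕ} (A : Fin k → Fin m → ℝ) (t : Fin k → ℝ)
    (w : Fin m → ℝ) : hRound A t w = gridRound t (matVec A w) := rfl

theorem gridStep_pos {k : ℕ} (hk : 0 < k) : 0 < gridStep k := by
  have hk' : (0 : ℝ) < k := by exact_mod_cast hk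
  rw [gridStep]
  positivity

theorem abs_gridRound_sub_le {k : ℕ} (hk : 0 < k) (t a : Fin k → ℝ) (i : Fin k) :
    |gridRound t a i - a i| ≤ gridStep k := by
  have hσ := gridStep_pos hk
  have h1 := Int.floor_le ((a i - gridStep k / 2) / gridStep k)
  have h2 := Int.lt_floor_add_one ((a i - gridStep k / 2) / gridStep k)
  rw [le_div_iff₀ hσ] at h1
  rw [div_lt_iff₀ hσ] at h2
  rw [abs_le]
  unfold gridRound roundDown
  split_ifs <;> constructor <;> linarith

theorem le_abs_gridRound {k : ℕ} (hk : 0 < k) (t a : Fin k → ℝ) (i : Fin k) :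
    gridStep k / 2 ≤ |gridRound t a i| := by
  have hσ := gridStep_pos hk
  have key : ∀ z : ℤ, gridStep k / 2 ≤ |gridStep k / 2 + z * gridStep k| := by
    intro z
    rcases le_or_gt 0 z with hz | hz
    · have : (0 : ℝ) ≤ z := by exact_mod_cast hz
      exact le_trans (by nlinarith) (le_abs_self _)
    · have : (z : ℝ) ≤ -1 := by exact_mod_cast (by omega : z ≤ -1)
      exact le_trans (by nlinarith) (neg_le_abs _)
  unfold gridRound roundDown
  split_ifs
  · exact key _
  · have := key (⌊(a i - gridStep k / 2) / gridStep k⌋ + 1)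
    push_cast at this
    rwa [add_mul, one_mul, ← add_assoc] at this

theorem measurable_roundDown (k : ℕ) : Measurable (roundDown k) := by
  unfold roundDown
  refine measurable_const.add (Measurable.mul_const ?_ _)
  exact (measurable_of_countable (fun z : ℤ => (z : ℝ))).comp
    (Int.measurable_floor.comp (by fun_prop))

theorem measurable_gridRound (k : ℕ) :
    Measurable (fun p : (Fin k → ℝ) × (Fin k → ℝ) => gridRound p.1 p.2) := by
  refine measurable_pi_lambda _ fun i => ?_
  have h1 : Measurable fun p : (Fin k → ℝ) × (Fin k → ℝ) => roundDown k (p.2 i) :=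
    (measurable_roundDown k).comp (by fun_prop)
  have h2 : Measurable fun p : (Fin k → ℝ) × (Fin k → ℝ) => roundProb k (p.2 i) := by
    unfold roundProb
    fun_prop
  exact Measurable.ite (measurableSet_le (by fun_prop) h2) h1 (by fun_prop)

theorem pi_gaussianReal_sum_mul_le {k : ℕ} (hk : 0 < k) (h a : Fin k → ℝ)
    (hN : 0 < √(∑ i, h i ^ 2)) (α β γ : ℝ) (hβ : 0 < β) :
    (Measure.pi fun _ : Fin k => gaussianReal 0 (k : NNReal)⁻¹)
        {g | ∑ r, h r * (α * a r + β * g r) ≤ γ / 2} =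
      ENNReal.ofReal (cdf (gaussianReal 0 1)
        (√k * (γ / 2 * β⁻¹ - α * β⁻¹ * ∑ r, h r * a r) / √(∑ i, h i ^ 2))) := by
  have hk' : (0 : ℝ) < k := by exact_mod_cast hk
  have hKpos : 0 < √(k : ℝ) := Real.sqrt_pos.2 hk'
  set N := √(∑ i, h i ^ 2) with hNdef
  have hN2 : N ^ 2 = ∑ i, h i ^ 2 := Real.sq_sqrt (Finset.sum_nonneg fun i _ => sq_nonneg _)
  have hc : ∑ r, (√k * h r / N) ^ 2 = k := by
    have : ∀ r, (√k * h r / N) ^ 2 = k / N ^ 2 * h r ^ 2 := fun r => by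
      rw [div_pow, mul_pow, Real.sq_sqrt hk'.le]; ring
    simp_rw [this]
    rw [← Finset.mul_sum, ← hN2]
    field_simp
  have hmap := map_sum_pi_gaussianReal (k : NNReal)⁻¹ (fun r => √k * h r / N)
  rw [hc, Real.toNNReal_natCast, inv_mul_cancel₀ (by exact_mod_cast hk.ne')] at hmap
  rw [ofReal_cdf, ← hmap, Measure.map_apply (by fun_prop) measurableSet_Iic]
  congr 1
  ext g
  simp only [Set.mem_ofPred_eq, Set.mem_preimage, Set.mem_Iic]
  have h1 : ∑ r, h r * (α * a r + β * g r) = α * ∑ r, h r * a r + β * ∑ r, h r * g r := by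
    rw [Finset.mul_sum, Finset.mul_sum, ← Finset.sum_add_distrib]
    exact Finset.sum_congr rfl fun r _ => by ring
  have h2 : ∑ r, √k * h r / N * g r = √k * (∑ r, h r * g r) / N := by
    rw [Finset.mul_sum, Finset.sum_div]
    exact Finset.sum_congr rfl fun r _ => by ring
  rw [h1, h2, div_le_div_iff_of_pos_right hN, mul_le_mul_iff_right₀ hKpos]
  have h3 : γ / 2 * β⁻¹ - α * β⁻¹ * ∑ r, h r * a r = (γ / 2 - α * ∑ r, h r * a r) / β := by
    ring
  rw [h3, le_div_iff₀ hβ]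
  constructor <;> intro h <;> linarith

theorem map_pi_pi_gaussianReal (k : ℕ) {m : ℕ} (v : NNReal) (w x : Fin m → ℝ) (β : ℝ)
    (hw : ∑ j, w j ^ 2 = 1) (hx : ∑ j, x j ^ 2 = 1) (hβ : β ^ 2 = 1 - dotp w x ^ 2) :
    (Measure.pi fun _ : Fin k => Measure.pi fun _ : Fin m => gaussianReal 0 v).map
        (fun A r => (∑ s, A r s * w s, ∑ s, A r s * x s)) =
      ((Measure.pi fun _ : Fin k => gaussianReal 0 v).prod
        (Measure.pi fun _ : Fin k => gaussianReal 0 v)).map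
        (fun p r => (p.1 r, dotp w x * p.1 r + β * p.2 r)) := by
  have hψ : Measurable (fun p : ℝ × ℝ => (p.1, dotp w x * p.1 + β * p.2)) := by fun_prop
  have hφ : Measurable (fun a : Fin m → ℝ => (∑ j, a j * w j, ∑ j, a j * x j)) := by fun_prop
  have := Measure.isProbabilityMeasure_map
    (μ := Measure.pi fun _ : Fin m => gaussianReal 0 v) hφ.aemeasurable
  have := Measure.isProbabilityMeasure_map
    (μ := (gaussianReal 0 v).prod (gaussianReal 0 v)) hψ.aemeasurable
  refine (Measure.pi_map_pi (μ := fun _ : Fin k => Measure.pi fun _ : Fin m => gaussianReal 0 v)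
    (f := fun _ a => (∑ s, a s * w s, ∑ s, a s * x s)) (fun _ => hφ.aemeasurable)).trans ?_
  have hpair : (Measure.pi fun _ : Fin m => gaussianReal 0 v).map
      (fun a => (∑ j, a j * w j, ∑ j, a j * x j)) =
      ((gaussianReal 0 v).prod (gaussianReal 0 v)).map
        (fun p => (p.1, dotp w x * p.1 + β * p.2)) :=
    map_sum_sum_pi_gaussianReal v w x β hw hx hβ
  rw [hpair]
  have he := (measurePreserving_arrowProdEquivProdArrow ℝ ℝ (Fin k)
    (fun _ => gaussianReal 0 v) (fun _ => gaussianReal 0 v)).symm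
  rw [← Measure.pi_map_pi (μ := fun _ : Fin k => (gaussianReal 0 v).prod (gaussianReal 0 v))
    (f := fun _ p => (p.1, dotp w x * p.1 + β * p.2))
    (fun _ => hψ.aemeasurable)]
  rw [← he.map_eq, Measure.map_map (by fun_prop) he.measurable]
  rfl

/-- Conditionally on `t` and the projected hypothesis, the rounded margin is Gaussian. -/
theorem roundMeasure_sum_hRound_le {k m : ℕ} (hk : 0 < k) (w x : Fin m → ℝ) (β γ : ℝ)
    (hw : ∑ j, w j ^ 2 = 1) (hx : ∑ j, x j ^ 2 = 1) (hβ0 : 0 < β)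
    (hβ : β ^ 2 = 1 - dotp w x ^ 2) :
    roundMeasure k m {p | ∑ r, hRound p.1 p.2 w r * ∑ s, p.1 r s * x s ≤ γ / 2} =
      ∫⁻ t, ∫⁻ a, ENNReal.ofReal (cdf (gaussianReal 0 1)
          (√k * (γ / 2 * β⁻¹ - dotp w x * β⁻¹ * ∑ r, gridRound t a r * a r) /
            √(∑ i, gridRound t a i ^ 2)))
        ∂(Measure.pi fun _ : Fin k => gaussianReal 0 (k : NNReal)⁻¹)
        ∂(Measure.pi fun _ : Fin k => volume.restrict (Set.Icc (0 : ℝ) 1)) := by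
  set S : Set ((Fin k → ℝ × ℝ) × (Fin k → ℝ)) :=
    {q | ∑ r, gridRound q.2 (fun i => (q.1 i).1) r * (q.1 r).2 ≤ γ / 2} with hS
  have hSm : MeasurableSet S := by
    refine measurableSet_le (Finset.measurable_fun_sum _ fun r _ => Measurable.mul ?_ ?_)
      measurable_const
    · have hq : Measurable (fun q : (Fin k → ℝ × ℝ) × (Fin k → ℝ) =>
          (q.2, fun i => (q.1 i).1)) := by fun_prop
      exact (measurable_pi_apply r).comp ((measurable_gridRound k).comp hq)
    · fun_prop
  have hΨ : Measurable (fun (A : Fin k → Fin m → ℝ) (r : Fin k) =>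
      (∑ s, A r s * w s, ∑ s, A r s * x s)) := by fun_prop
  have hΘ : Measurable (fun (p : (Fin k → ℝ) × (Fin k → ℝ)) (r : Fin k) =>
      (p.1 r, dotp w x * p.1 r + β * p.2 r)) := by fun_prop
  have hpre : {p : (Fin k → Fin m → ℝ) × (Fin k → ℝ) |
      ∑ r, hRound p.1 p.2 w r * ∑ s, p.1 r s * x s ≤ γ / 2} =
      Prod.map (fun (A : Fin k → Fin m → ℝ) (r : Fin k) =>
        (∑ s, A r s * w s, ∑ s, A r s * x s)) id ⁻¹' S := rfl
  rw [hpre, ← Measure.map_apply (hΨ.prodMap measurable_id) hSm, roundMeasure,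
    ← Measure.map_prod_map _ _ hΨ measurable_id, Measure.map_id,
    map_pi_pi_gaussianReal k _ w x β hw hx hβ]
  have := Measure.isProbabilityMeasure_map
    (μ := (Measure.pi fun _ : Fin k => gaussianReal 0 (k : NNReal)⁻¹).prod
      (Measure.pi fun _ : Fin k => gaussianReal 0 (k : NNReal)⁻¹)) hΘ.aemeasurable
  rw [Measure.prod_apply_symm hSm]
  refine lintegral_congr fun t => ?_
  have hSt : MeasurableSet ((fun q : Fin k → ℝ × ℝ => (q, t)) ⁻¹' S) :=
    measurable_prodMk_right hSm
  rw [Measure.map_apply hΘ hSt, Measure.prod_apply (hΘ hSt)]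
  refine lintegral_congr fun a => ?_
  refine pi_gaussianReal_sum_mul_le hk (gridRound t a) a ?_ _ _ _ hβ0
  have := (sum_mul_bounds_of_abs_sub_le hk a (gridRound t a) (abs_gridRound_sub_le hk t a)
    (le_abs_gridRound hk t a)).2.2.1
  linarith

theorem three_quarters_pow_le_exp {k : ℕ} (hk : 50 ≤ k) :
    4 * (3 / 4 : ℝ) ^ k ≤ Real.exp (-k / 200) / 100 := by
  have h1 : (9 / 10 : ℝ) ^ k ≤ Real.exp (-k / 200) := by
    have : Real.exp (-k / 200) = Real.exp (-1 / 200) ^ k := by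
      rw [← Real.exp_nat_mul]; congr 1; ring
    rw [this]
    gcongr
    linarith [Real.add_one_le_exp (-1 / 200 : ℝ)]
  have h2 : (5 / 6 : ℝ) ^ k ≤ (5 / 6) ^ 50 :=
    pow_le_pow_of_le_one (by norm_num) (by norm_num) hk
  have h3 : (3 / 4 : ℝ) ^ k = (5 / 6) ^ k * (9 / 10) ^ k := by rw [← mul_pow]; norm_num
  calc 4 * (3 / 4 : ℝ) ^ k = 4 * (5 / 6) ^ k * (9 / 10) ^ k := by rw [h3]; ring
    _ ≤ 4 * (5 / 6) ^ 50 * Real.exp (-k / 200) := by gcongr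
    _ ≤ 1 / 100 * Real.exp (-k / 200) := by gcongr; norm_num
    _ = _ := by ring

theorem integral_ite_sum_sq_nonneg {k : ℕ} (hk : 50 ≤ k) :
    0 ≤ ∫ a : Fin k → ℝ, (if ∑ i, a i ^ 2 ≤ 1 / 4 then -2 else
        if ∑ i, a i ^ 2 < 4 then Real.exp (-√(k : ℝ) ^ 2 / 200) / 100 else 0)
      ∂(Measure.pi fun _ : Fin k => gaussianReal 0 (k : NNReal)⁻¹) := by
  set μ := Measure.pi fun _ : Fin k => gaussianReal 0 (k : NNReal)⁻¹
  rw [Real.sq_sqrt (by positivity)]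
  have hE := three_quarters_pow_le_exp hk
  set E := Real.exp (-k / 200) / 100 with hEdef
  have hE0 : 0 < E := by positivity
  have hE1 : E ≤ 1 := by
    have : Real.exp (-k / 200) ≤ 1 := by
      rw [Real.exp_le_one_iff]
      have : (0 : ℝ) ≤ k := by positivity
      linarith
    rw [hEdef]
    linarith
  have hsmall := pi_gaussianReal_sum_sq_le k (by omega)
  have hlarge := pi_gaussianReal_le_sum_sq k (by omega)
  set B : Set (Fin k → ℝ) := {a | ∑ i, a i ^ 2 ≤ 1 / 4} with hB
  set C : Set (Fin k → ℝ) := {a | 4 ≤ ∑ i, a i ^ 2} with hC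
  have hBm : MeasurableSet B := measurableSet_le (by fun_prop) measurable_const
  have hCm : MeasurableSet C := measurableSet_le measurable_const (by fun_prop)
  have hrw : ∀ a : Fin k → ℝ, (if ∑ i, a i ^ 2 ≤ 1 / 4 then -2 else
        if ∑ i, a i ^ 2 < 4 then E else 0) =
      E - (B.indicator (fun _ => 2 + E) a + C.indicator (fun _ => E) a) := by
    intro a
    rcases le_or_gt (∑ i, a i ^ 2) (1 / 4) with h1 | h1
    · have h2 : a ∈ B := h1
      have h3 : a ∉ C := fun h : 4 ≤ ∑ i, a i ^ 2 => by linarith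
      rw [if_pos h1, Set.indicator_of_mem h2, Set.indicator_of_notMem h3]
      ring
    · have h2 : a ∉ B := fun h : ∑ i, a i ^ 2 ≤ 1 / 4 => by linarith
      rw [if_neg h1.not_ge, Set.indicator_of_notMem h2]
      rcases lt_or_ge (∑ i, a i ^ 2) 4 with h4 | h4
      · have h3 : a ∉ C := fun h : 4 ≤ ∑ i, a i ^ 2 => by linarith
        rw [if_pos h4, Set.indicator_of_notMem h3]
        ring
      · have h3 : a ∈ C := h4
        rw [if_neg h4.not_gt, Set.indicator_of_mem h3]
        ring
  simp_rw [hrw]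
  have hBi : Integrable (B.indicator fun _ => 2 + E) μ := (integrable_const _).indicator hBm
  have hCi : Integrable (C.indicator fun _ => E) μ := (integrable_const _).indicator hCm
  have hBCi : Integrable (fun a => B.indicator (fun _ => 2 + E) a + C.indicator (fun _ => E) a) μ :=
    hBi.add hCi
  rw [integral_sub (integrable_const _) hBCi, integral_add hBi hCi,
    integral_indicator_const _ hBm, integral_indicator_const _ hCm]
  simp only [integral_const, probReal_univ, smul_eq_mul, one_mul]
  have h1 : μ.real B * (2 + E) ≤ (3 / 4) ^ k * 3 := by
    gcongr
    linarith
  have h2 : μ.real C * E ≤ 1 / 4 * E := by gcongr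
  linarith

theorem lintegral_cdf_le_lintegral_cdf {k : ℕ} (hk : 50 ≤ k) (t : Fin k → ℝ)
    {γ b₁ b₂ c₁ c₂ : ℝ} (hγ : 0 < γ) (hγ' : γ ≤ 1 / 1000)
    (hb₁ : 0 ≤ b₁) (hb : b₁ ≤ b₂) (hb₂ : b₂ ≤ 11 / 10 * γ) (hc₁ : 0 < c₁) (hc₂ : 0 < c₂)
    (h₁ : c₁ ^ 2 = 1 + b₁ ^ 2) (h₂ : c₂ ^ 2 = 1 + b₂ ^ 2) :
    ∫⁻ a, ENNReal.ofReal (cdf (gaussianReal 0 1)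
          (√k * (γ / 2 * c₂ - b₂ * ∑ r, gridRound t a r * a r) /
            √(∑ i, gridRound t a i ^ 2)))
        ∂(Measure.pi fun _ : Fin k => gaussianReal 0 (k : NNReal)⁻¹) ≤
      ∫⁻ a, ENNReal.ofReal (cdf (gaussianReal 0 1)
          (√k * (γ / 2 * c₁ - b₁ * ∑ r, gridRound t a r * a r) /
            √(∑ i, gridRound t a i ^ 2)))
        ∂(Measure.pi fun _ : Fin k => gaussianReal 0 (k : NNReal)⁻¹) := by
  have hk0 : 0 < k := by omega
  have hk' : (0 : ℝ) < k := by exact_mod_cast hk0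
  set μ := Measure.pi fun _ : Fin k => gaussianReal 0 (k : NNReal)⁻¹
  have hg : Measurable (fun a : Fin k → ℝ => gridRound t a) :=
    (measurable_gridRound k).comp (by fun_prop : Measurable fun a : Fin k → ℝ => (t, a))
  have hgi : ∀ i, Measurable (fun a : Fin k → ℝ => gridRound t a i) := fun i =>
    (measurable_pi_apply i).comp hg
  have hint : ∀ b c : ℝ, Integrable (fun a => cdf (gaussianReal 0 1)
      (√k * (γ / 2 * c - b * ∑ r, gridRound t a r * a r) / √(∑ i, gridRound t a i ^ 2))) μ := by
    intro b c
    refine Integrable.of_bound (C := 1) (Measurable.aestronglyMeasurable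
      ((monotone_cdf _).measurable.comp (by fun_prop))) (ae_of_all _ fun a => ?_)
    rw [Real.norm_eq_abs, abs_of_nonneg (cdf_nonneg _ _)]
    exact cdf_le_one _ _
  rw [← ofReal_integral_eq_lintegral_ofReal (hint _ _) (ae_of_all _ fun a => cdf_nonneg _ _),
    ← ofReal_integral_eq_lintegral_ofReal (hint _ _) (ae_of_all _ fun a => cdf_nonneg _ _)]
  refine ENNReal.ofReal_le_ofReal ?_
  rw [← sub_nonneg, ← integral_sub (hint _ _) (hint _ _)]
  have hpt : ∀ a : Fin k → ℝ, _ := fun a =>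
    have hs := sum_mul_bounds_of_abs_sub_le hk0 a (gridRound t a) (abs_gridRound_sub_le hk0 t a)
      (le_abs_gridRound hk0 t a)
    le_cdf_sub_cdf_of_sum_sq (Real.sqrt_pos.2 hk') hγ hγ' hs.1 hs.2.1 hs.2.2.1 hs.2.2.2
      (Finset.sum_nonneg fun i _ => sq_nonneg (a i)) hb₁ hb hb₂ hc₁ hc₂ h₁ h₂
  refine le_trans ?_ (integral_mono ?_ ((hint _ _).sub (hint _ _)) hpt)
  · rw [integral_const_mul]
    exact mul_nonneg (mul_nonneg (sub_nonneg.2 hb) (Real.sqrt_nonneg _))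
      (integral_ite_sum_sq_nonneg hk)
  · refine Integrable.const_mul (Integrable.of_bound (C := 2) (Measurable.aestronglyMeasurable
      (Measurable.ite (measurableSet_le (by fun_prop) measurable_const) measurable_const
        (Measurable.ite (measurableSet_lt (by fun_prop) measurable_const) measurable_const
          measurable_const))) (ae_of_all _ fun a => ?_)) _
    have h0 := Real.exp_pos (-√(k : ℝ) ^ 2 / 200)
    have h1 : Real.exp (-√(k : ℝ) ^ 2 / 200) ≤ 1 := by
      rw [Real.exp_le_one_iff]
      linarith [sq_nonneg (√(k : ℝ))]
    rw [Real.norm_eq_abs, abs_le]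
    split_ifs <;> constructor <;> linarith

/-- (Claim A.4 of the paper.) Anti-monotonicity of the probability that
the rounded margin is at most `γ_i/2`, as a function of the original margin in
`(0, γ_i]`. -/
theorem statement15 : ∃ cγ : ℝ, 0 < cγ ∧ ∃ k₀ : ℕ, ∀ (m k : ℕ), k₀ ≤ k →
    ∀ γi : ℝ, 0 < γi → γi ≤ cγ →
    ∀ (w₁ x₁ w₂ x₂ : Fin m → ℝ) (y₁ y₂ : ℝ),
    (∑ j, w₁ j ^ 2) = 1 → (∑ j, x₁ j ^ 2) = 1 →
    (∑ j, w₂ j ^ 2) = 1 → (∑ j, x₂ j ^ 2) = 1 →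
    (y₁ = 1 ∨ y₁ = -1) → (y₂ = 1 ∨ y₂ = -1) →
    0 < y₁ * dotp w₁ x₁ → y₁ * dotp w₁ x₁ ≤ y₂ * dotp w₂ x₂ →
    y₂ * dotp w₂ x₂ ≤ γi →
    roundMeasure k m
        {p | y₂ * ∑ r, hRound p.1 p.2 w₂ r * ∑ s, p.1 r s * x₂ s ≤ γi / 2} ≤
      roundMeasure k m
        {p | y₁ * ∑ r, hRound p.1 p.2 w₁ r * ∑ s, p.1 r s * x₁ s ≤ γi / 2} := by
  refine ⟨1 / 1000, by norm_num, 50, ?_⟩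
  intro m k hk γ hγ hγ' w₁ x₁ w₂ x₂ y₁ y₂ hw₁ hx₁ hw₂ hx₂ hy₁ hy₂ hpos hle hub
  have hk0 : 0 < k := by omega
  have hrw : ∀ (w x : Fin m → ℝ) (y : ℝ),
      {p : (Fin k → Fin m → ℝ) × (Fin k → ℝ) |
        y * ∑ r, hRound p.1 p.2 w r * ∑ s, p.1 r s * x s ≤ γ / 2} =
      {p | ∑ r, hRound p.1 p.2 w r * ∑ s, p.1 r s * (y * x s) ≤ γ / 2} := by
    intro w x y
    have : ∀ p : (Fin k → Fin m → ℝ) × (Fin k → ℝ),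
        y * ∑ r, hRound p.1 p.2 w r * ∑ s, p.1 r s * x s =
          ∑ r, hRound p.1 p.2 w r * ∑ s, p.1 r s * (y * x s) := fun p => by
      simp_rw [Finset.mul_sum]
      exact Finset.sum_congr rfl fun r _ => Finset.sum_congr rfl fun s _ => by ring
    simp_rw [this]
  have hdot : ∀ (w x : Fin m → ℝ) (y : ℝ), dotp w (fun s => y * x s) = y * dotp w x := by
    intro w x y
    rw [dotp, dotp, Finset.mul_sum]
    exact Finset.sum_congr rfl fun s _ => by ring
  have hunit : ∀ (x : Fin m → ℝ) (y : ℝ), ∑ j, x j ^ 2 = 1 → (y = 1 ∨ y = -1) →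
      ∑ j, (y * x j) ^ 2 = 1 := by
    rintro x y hx (rfl | rfl) <;> simpa using hx
  set α₁ := y₁ * dotp w₁ x₁
  set α₂ := y₂ * dotp w₂ x₂
  have hsq : α₁ ^ 2 ≤ α₂ ^ 2 := pow_le_pow_left₀ hpos.le hle 2
  have hsq' : α₂ ^ 2 ≤ (1 / 1000) ^ 2 := pow_le_pow_left₀ (by linarith) (by linarith) 2
  have hβ₁ : √(1 - α₁ ^ 2) ^ 2 = 1 - α₁ ^ 2 := Real.sq_sqrt (by linarith)
  have hβ₂ : √(1 - α₂ ^ 2) ^ 2 = 1 - α₂ ^ 2 := Real.sq_sqrt (by linarith)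
  have hβle : √(1 - α₂ ^ 2) ≤ √(1 - α₁ ^ 2) := Real.sqrt_le_sqrt (by linarith)
  have hβ₂l : 10 / 11 ≤ √(1 - α₂ ^ 2) := Real.le_sqrt_of_sq_le (by linarith)
  set β₁ := √(1 - α₁ ^ 2)
  set β₂ := √(1 - α₂ ^ 2)
  have hβ₂0 : 0 < β₂ := by linarith
  have hβ₁0 : 0 < β₁ := by linarith
  rw [hrw, hrw,
    roundMeasure_sum_hRound_le hk0 w₂ _ β₂ γ hw₂ (hunit x₂ y₂ hx₂ hy₂) hβ₂0 (by rw [hdot, hβ₂]),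
    roundMeasure_sum_hRound_le hk0 w₁ _ β₁ γ hw₁ (hunit x₁ y₁ hx₁ hy₁) hβ₁0 (by rw [hdot, hβ₁])]
  simp_rw [hdot]
  refine lintegral_mono fun t => ?_
  refine lintegral_cdf_le_lintegral_cdf hk t hγ hγ' ?_ ?_ ?_ (inv_pos.2 hβ₁0) (inv_pos.2 hβ₂0)
    ?_ ?_
  · positivity
  · have h0 : 0 ≤ α₂ := by linarith
    gcongr
  · have h1 : β₂⁻¹ ≤ 11 / 10 := by
      rw [inv_le_comm₀ hβ₂0 (by norm_num)]
      linarith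
    calc α₂ * β₂⁻¹ ≤ γ * (11 / 10) := by gcongr
      _ = 11 / 10 * γ := by ring
  · field_simp
    linarith
  · field_simp
    linarith
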